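/- (q-binomial theorem a la Heine) Let 0<q<1, a∈ℂ and z∈ℂ with |z|<1. Then Σ_{k=0}^∞ ((a;q)_k/(q;q)_k) z^k = (az;q)_∞/(z;q)_∞. -/

import Mathlib

noncomputable section

/-- The finite q-shifted factorial `(a;q)_k`. -/
def qp (q a : ℂ) (k : ℕ) : ℂ := ∏ j ∈ Finset.range k, (1 - a * q ^ j)

/-- The infinite q-shifted factorial `(a;q)_∞`. -/
def qpi (q a : ℂ) : ℂ := ∏' j : ℕ, (1 - a * q ^ j)

/-!
Heine's argument. Let `F w = ∑ c_k * w^k` with `c_k = (a;q)_k / (q;q)_k`. The recursion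
`(1 - q^(k+1)) c_(k+1) = (1 - a q^k) c_k` amounts to the functional equation
`(1 - w) F(w) = (1 - a w) F(w q)`, whose iteration is `(z;q)_n F(z) = (a z;q)_n F(z q^n)`.
As `n → ∞` the argument `z q^n` tends to `0` and `F(z q^n)` to `F(0) = 1`, so that
`(z;q)_∞ F(z) = (a z;q)_∞`.
-/

open Filter Topology

section SeminormedRing

variable {R : Type*} [SeminormedRing R]

lemma norm_mul_pow_le_of_norm_le_one [NormOneClass R] {q : R} (hq : ‖q‖ ≤ 1) (z : R) (n : ℕ) :
    ‖z * q ^ n‖ ≤ ‖z‖ :=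
  calc ‖z * q ^ n‖ ≤ ‖z‖ * ‖q‖ ^ n := norm_mul_le_of_le le_rfl (norm_pow_le q n)
    _ ≤ ‖z‖ := mul_le_of_le_one_right (norm_nonneg z) (pow_le_one₀ (norm_nonneg q) hq)

lemma mul_pow_ne_one_of_norm_lt_one [NormOneClass R] {q z : R} (hq : ‖q‖ ≤ 1) (hz : ‖z‖ < 1)
    (n : ℕ) : z * q ^ n ≠ 1 := by
  intro h
  have hlt := (norm_mul_pow_le_of_norm_le_one hq z n).trans_lt hz
  rw [h, norm_one] at hlt
  exact hlt.false

lemma summable_of_succ_eq_mul_of_tendsto [CompleteSpace R] {f r : ℕ → R} {l : R}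
    (hf : ∀ k, f (k + 1) = r k * f k) (hr : Tendsto r atTop (𝓝 l)) (hl : ‖l‖ < 1) :
    Summable f := by
  obtain ⟨ρ, hlρ, hρ⟩ := exists_between hl
  refine summable_of_ratio_norm_eventually_le hρ ?_
  filter_upwards [hr.norm.eventually_le_const hlρ] with k hk
  rw [hf]
  exact norm_mul_le_of_le hk le_rfl

end SeminormedRing

lemma tendsto_tsum_mul_pow_of_tendsto_zero {ι R : Type*} [NormedRing R] [NormOneClass R]
    [CompleteSpace R] {l : Filter ι} {c : ℕ → R} {ρ : ℝ} {w : ι → R}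
    (hc : Summable fun k => ‖c k‖ * ρ ^ k) (hw : Tendsto w l (𝓝 0)) (hρ : ∀ᶠ i in l, ‖w i‖ ≤ ρ) :
    Tendsto (fun i => ∑' k, c k * w i ^ k) l (𝓝 (c 0)) := by
  have hterm (k : ℕ) : Tendsto (fun i => c k * w i ^ k) l (𝓝 (c k * 0 ^ k)) :=
    (hw.pow k).const_mul (c k)
  have hbound : ∀ᶠ i in l, ∀ k, ‖c k * w i ^ k‖ ≤ ‖c k‖ * ρ ^ k := by
    filter_upwards [hρ] with i hi k
    exact norm_mul_le_of_le le_rfl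
      ((norm_pow_le (w i) k).trans (pow_le_pow_left₀ (norm_nonneg _) hi k))
  have hzero : ∑' k, c k * 0 ^ k = c 0 := by
    rw [tsum_eq_single 0 fun k hk => by rw [zero_pow hk, mul_zero], pow_zero, mul_one]
  exact hzero ▸ tendsto_tsum_of_dominated_convergence hc hterm hbound

lemma qp_zero (q a : ℂ) : qp q a 0 = 1 :=
  Finset.prod_range_zero _

lemma qp_succ (q a : ℂ) (k : ℕ) : qp q a (k + 1) = qp q a k * (1 - a * q ^ k) :=
  Finset.prod_range_succ _ k

/-- The coefficient `(a;q)_k / (q;q)_k` of the `q`-binomial series. -/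
def heineCoeff (q a : ℂ) (k : ℕ) : ℂ := qp q a k / qp q q k

/-- The `q`-binomial series `∑ (a;q)_k / (q;q)_k * w ^ k`, that is, Heine's basic hypergeometric
series `₁φ₀(a; q, w)`. As a `tsum` it is `0` where the series diverges. -/
def heineSeries (q a w : ℂ) : ℂ := ∑' k, heineCoeff q a k * w ^ k

lemma heineCoeff_zero (q a : ℂ) : heineCoeff q a 0 = 1 := by
  rw [heineCoeff, qp_zero, qp_zero, div_one]

lemma heineCoeff_succ (q a : ℂ) (k : ℕ) :
    heineCoeff q a (k + 1) = (1 - a * q ^ k) / (1 - q * q ^ k) * heineCoeff q a k := by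
  rw [heineCoeff, heineCoeff, qp_succ, qp_succ, mul_div_mul_comm, mul_comm]

lemma one_sub_mul_heineCoeff_succ {q : ℂ} (hq : ‖q‖ < 1) (a : ℂ) (k : ℕ) :
    (1 - q * q ^ k) * heineCoeff q a (k + 1) = (1 - a * q ^ k) * heineCoeff q a k := by
  have hne : 1 - q * q ^ k ≠ 0 := sub_ne_zero_of_ne (mul_pow_ne_one_of_norm_lt_one hq.le hq k).symm
  rw [heineCoeff_succ, ← mul_assoc, mul_div_cancel₀ _ hne]

lemma summable_heineCoeff_mul_pow {q w : ℂ} (hq : ‖q‖ < 1) (a : ℂ) (hw : ‖w‖ < 1) :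
    Summable fun k => heineCoeff q a k * w ^ k := by
  have hfactor (b : ℂ) : Tendsto (fun k : ℕ => 1 - b * q ^ k) atTop (𝓝 1) := by
    simpa using ((tendsto_pow_atTop_nhds_zero_of_norm_lt_one hq).const_mul b).const_sub 1
  have hratio : Tendsto (fun k : ℕ => (1 - a * q ^ k) / (1 - q * q ^ k) * w) atTop (𝓝 w) := by
    simpa using ((hfactor a).div (hfactor q) one_ne_zero).mul_const w
  refine summable_of_succ_eq_mul_of_tendsto (fun k => ?_) hratio hw
  rw [heineCoeff_succ, pow_succ]
  ring

lemma one_sub_mul_heineSeries {q w : ℂ} (hq : ‖q‖ < 1) (a : ℂ) (hw : ‖w‖ < 1) :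
    (1 - w) * heineSeries q a w = (1 - a * w) * heineSeries q a (w * q) := by
  have hwq : ‖w * q‖ < 1 := by
    simpa using (norm_mul_pow_le_of_norm_le_one hq.le w 1).trans_lt hw
  have hs := summable_heineCoeff_mul_pow hq a hw
  have hsq := summable_heineCoeff_mul_pow hq a hwq
  have hterm (k : ℕ) :
      heineCoeff q a (k + 1) * w ^ (k + 1) - heineCoeff q a (k + 1) * (w * q) ^ (k + 1) =
        w * (heineCoeff q a k * w ^ k - a * (heineCoeff q a k * (w * q) ^ k)) := by
    linear_combination w ^ (k + 1) * one_sub_mul_heineCoeff_succ hq a k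
  have hdiff : heineSeries q a w - heineSeries q a (w * q) =
      w * (heineSeries q a w - a * heineSeries q a (w * q)) :=
    calc heineSeries q a w - heineSeries q a (w * q)
        = ∑' k, (heineCoeff q a k * w ^ k - heineCoeff q a k * (w * q) ^ k) :=
          (hs.tsum_sub hsq).symm
      _ = ∑' k, w * (heineCoeff q a k * w ^ k - a * (heineCoeff q a k * (w * q) ^ k)) := by
          rw [(hs.sub hsq).tsum_eq_zero_add, pow_zero, pow_zero, sub_self, zero_add]
          exact tsum_congr hterm
      _ = w * (heineSeries q a w - a * heineSeries q a (w * q)) := by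
          rw [tsum_mul_left, hs.tsum_sub (hsq.mul_left a), tsum_mul_left, heineSeries, heineSeries]
  linear_combination hdiff

lemma qp_mul_heineSeries {q z : ℂ} (hq : ‖q‖ < 1) (a : ℂ) (hz : ‖z‖ < 1) (n : ℕ) :
    qp q z n * heineSeries q a z = qp q (a * z) n * heineSeries q a (z * q ^ n) := by
  induction n with
  | zero => simp only [qp_zero, pow_zero, mul_one]
  | succ n ih =>
    have hstep := one_sub_mul_heineSeries hq a
      ((norm_mul_pow_le_of_norm_le_one hq.le z n).trans_lt hz)
    rw [mul_assoc z, ← pow_succ] at hstep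
    rw [qp_succ, qp_succ]
    linear_combination (1 - z * q ^ n) * ih + qp q (a * z) n * hstep

lemma tendsto_heineSeries_mul_pow {q z : ℂ} (hq : ‖q‖ < 1) (a : ℂ) (hz : ‖z‖ < 1) :
    Tendsto (fun n : ℕ => heineSeries q a (z * q ^ n)) atTop (𝓝 1) := by
  have hsum : Summable fun k => ‖heineCoeff q a k‖ * ‖z‖ ^ k := by
    simpa only [norm_mul, norm_pow] using (summable_heineCoeff_mul_pow hq a hz).norm
  have harg : Tendsto (fun n : ℕ => z * q ^ n) atTop (𝓝 0) := by
    simpa only [mul_zero] using (tendsto_pow_atTop_nhds_zero_of_norm_lt_one hq).const_mul z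
  rw [← heineCoeff_zero q a]
  exact tendsto_tsum_mul_pow_of_tendsto_zero hsum harg
    (Eventually.of_forall (norm_mul_pow_le_of_norm_le_one hq.le z))

lemma summable_norm_neg_mul_pow {q : ℂ} (hq : ‖q‖ < 1) (b : ℂ) :
    Summable fun j : ℕ => ‖-(b * q ^ j)‖ :=
  ((summable_geometric_of_norm_lt_one hq).mul_left b).neg.norm

lemma tendsto_qp_qpi {q : ℂ} (hq : ‖q‖ < 1) (b : ℂ) :
    Tendsto (qp q b) atTop (𝓝 (qpi q b)) := by
  have hprod := multipliable_one_add_of_summable (summable_norm_neg_mul_pow hq b)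
  simp only [← sub_eq_add_neg] at hprod
  exact hprod.hasProd.tendsto_prod_nat

lemma qpi_ne_zero {q b : ℂ} (hq : ‖q‖ < 1) (hb : ∀ j : ℕ, b * q ^ j ≠ 1) : qpi q b ≠ 0 := by
  have hfactor (j : ℕ) : 1 + -(b * q ^ j) ≠ 0 := by
    rw [← sub_eq_add_neg]
    exact sub_ne_zero_of_ne (hb j).symm
  have hprod := tprod_one_add_ne_zero_of_summable hfactor (summable_norm_neg_mul_pow hq b)
  simp only [← sub_eq_add_neg] at hprod
  exact hprod

lemma qpi_mul_heineSeries {q z : ℂ} (hq : ‖q‖ < 1) (a : ℂ) (hz : ‖z‖ < 1) :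
    qpi q z * heineSeries q a z = qpi q (a * z) := by
  have hleft : Tendsto (fun n => qp q z n * heineSeries q a z) atTop
      (𝓝 (qpi q z * heineSeries q a z)) :=
    (tendsto_qp_qpi hq z).mul_const _
  have hright : Tendsto (fun n => qp q (a * z) n * heineSeries q a (z * q ^ n)) atTop
      (𝓝 (qpi q (a * z))) := by
    simpa only [mul_one] using (tendsto_qp_qpi hq (a * z)).mul (tendsto_heineSeries_mul_pow hq a hz)
  exact tendsto_nhds_unique (hleft.congr (qp_mul_heineSeries hq a hz)) hright

theorem stmt1_general {q z : ℂ} (hq : ‖q‖ < 1) (a : ℂ) (hz : ‖z‖ < 1) :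
    HasSum (fun k : ℕ => qp q a k / qp q q k * z ^ k) (qpi q (a * z) / qpi q z) := by
  have hne : qpi q z ≠ 0 := qpi_ne_zero hq (mul_pow_ne_one_of_norm_lt_one hq.le hz)
  rw [← qpi_mul_heineSeries hq a hz, mul_div_cancel_left₀ _ hne]
  exact (summable_heineCoeff_mul_pow hq a hz).hasSum

/-- The q-binomial theorem: for `0<q<1` and `|z|<1`,
`Σ_{k≥0} ((a;q)_k/(q;q)_k) z^k = (az;q)_∞/(z;q)_∞`. -/
theorem stmt1 (q : ℝ) (hq0 : 0 < q) (hq1 : q < 1) (a z : ℂ) (hz : ‖z‖ < 1) :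
    HasSum (fun k : ℕ => qp (q : ℂ) a k / qp (q : ℂ) (q : ℂ) k * z ^ k)
      (qpi (q : ℂ) (a * z) / qpi (q : ℂ) z) :=
  stmt1_general (by rwa [Complex.norm_real, Real.norm_of_nonneg hq0.le]) a hz
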